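/- arXiv:2410.01549 — 2 statements merged into one kernel-verified Lean document; each statement's English description precedes it below -/
import Mathlib

section
/- Let k ≥ 2 be even and let m ≥ 6 be even. Set c = m−2 and d = m−4 if m ≡ 0 (mod 4), and c = m−1 and d = m−2 if m ≡ 2 (mod 4). Suppose there exists an edge 2-coloring of the complete graph on n vertices with no monochromatic copy of the kipas K̂_m. Then there exists a Gallai k-coloring of the complete graph on n + 5c(5^((k−2)/2) − 1) − d(k−2) vertices with no monochromatic copy of K̂_m. Consequently GR_k(K̂_m) ≥ R_2(K̂_m) + 5c(5^((k−2)/2) − 1) − d(k−2), where R_2(K̂_m) is the 2-color Ramsey number of the kipas. -/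
open SimpleGraph

/-- A monochromatic copy of `H` in the graph `G` edge-colored by `c`:
an injective map sending edges of `H` to edges of `G`, all image edges of one color. -/
def IsMonoCopy {α V : Type*} {k : ℕ} (G : SimpleGraph V) (c : V → V → Fin k)
    (H : SimpleGraph α) : Prop :=
  ∃ (f : α → V) (i : Fin k), Function.Injective f ∧
    ∀ a b, H.Adj a b → G.Adj (f a) (f b) ∧ c (f a) (f b) = i

/-- The edge coloring `c` of `G` has no rainbow triangle. -/
def NoRainbowTriangle {V : Type*} {k : ℕ} (G : SimpleGraph V) (c : V → V → Fin k) : Prop :=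
  ¬ ∃ x y z : V, G.Adj x y ∧ G.Adj y z ∧ G.Adj x z ∧
    c x y ≠ c y z ∧ c y z ≠ c x z ∧ c x y ≠ c x z

/-- The Gallai–Ramsey number `GR_k(H)`: the least `N` such that every
rainbow-triangle-free `k`-edge-coloring of the complete graph on `N` vertices
contains a monochromatic copy of `H`. -/
noncomputable def GallaiRamsey (k : ℕ) {α : Type*} (H : SimpleGraph α) : ℕ :=
  sInf {N | ∀ c : Fin N → Fin N → Fin k, (∀ x y, c x y = c y x) →
    NoRainbowTriangle (⊤ : SimpleGraph (Fin N)) c →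
    IsMonoCopy (⊤ : SimpleGraph (Fin N)) c H}

/-- The diagonal two-color Ramsey number `R(H, H)`. -/
noncomputable def Ramsey2 {α : Type*} (H : SimpleGraph α) : ℕ :=
  sInf {N | ∀ c : Fin N → Fin N → Fin 2, (∀ x y, c x y = c y x) →
    IsMonoCopy (⊤ : SimpleGraph (Fin N)) c H}

/-- The fan `F_3 = K_1 + 3K_2`: vertex `0` is the center, joined to all other
vertices, together with the three disjoint edges `12`, `34`, `56`. -/
def fanF3 : SimpleGraph (Fin 7) :=
  SimpleGraph.fromRel (fun a b => a = 0 ∨ (a.val % 2 = 1 ∧ b.val = a.val + 1))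

/-- The kipas `K̂_m = K_1 + P_m`: vertex `0` is the center, joined to all other
vertices, and `1, 2, …, m` form a path. -/
def kipasG (m : ℕ) : SimpleGraph (Fin (m + 1)) :=
  SimpleGraph.fromRel (fun a b => a = 0 ∨ (1 ≤ a.val ∧ b.val = a.val + 1))

/-- The wheel `W_m = K_1 + C_m`: vertex `0` is the center, joined to all other
vertices, and `1, 2, …, m` form a cycle. -/
def wheelG (m : ℕ) : SimpleGraph (Fin (m + 1)) :=
  SimpleGraph.fromRel (fun a b =>
    a = 0 ∨ (1 ≤ a.val ∧ b.val = a.val + 1) ∨ (a.val = m ∧ b.val = 1))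

/-- The star `K_{1,n}`: vertex `0` is the center, joined to all other vertices. -/
def starG (n : ℕ) : SimpleGraph (Fin (n + 1)) :=
  SimpleGraph.fromRel (fun a _ => a = 0)

/-- `K⁺_{1,n}`, the star `K_{1,n}` with one edge subdivided: vertex `0` is joined to
`1, …, n`, and the extra vertex `n+1` is joined to `n`. -/
def starPlusG (n : ℕ) : SimpleGraph (Fin (n + 2)) :=
  SimpleGraph.fromRel (fun a b => (a = 0 ∧ b.val ≤ n) ∨ (a.val = n ∧ b.val = n + 1))

/-- The complete graph on `Fin N` with the single edge `{0, 1}` deleted. -/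
def compMinusEdge (N : ℕ) : SimpleGraph (Fin N) where
  Adj x y := x ≠ y ∧ ¬(x.val = 0 ∧ y.val = 1) ∧ ¬(x.val = 1 ∧ y.val = 0)
  symm := by
    refine ⟨?_⟩
    intro x y h
    exact ⟨h.1.symm, fun hc => h.2.2 ⟨hc.2, hc.1⟩, fun hc => h.2.1 ⟨hc.2, hc.1⟩⟩
  loopless := by refine ⟨?_⟩; intro x h; exact h.1 rfl

/-- The complete graph on `Fin M` together with one extra vertex (`none`)
joined exactly to the vertices of `A`. -/
def addVertex (M : ℕ) (A : Set (Fin M)) : SimpleGraph (Option (Fin M)) where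
  Adj x y := (∃ a b : Fin M, x = some a ∧ y = some b ∧ a ≠ b) ∨
    (∃ a ∈ A, (x = some a ∧ y = none) ∨ (x = none ∧ y = some a))
  symm := by
    refine ⟨?_⟩
    rintro x y (⟨a, b, hx, hy, hab⟩ | ⟨a, ha, (⟨hx, hy⟩ | ⟨hx, hy⟩)⟩)
    · exact Or.inl ⟨b, a, hy, hx, hab.symm⟩
    · exact Or.inr ⟨a, ha, Or.inr ⟨hy, hx⟩⟩
    · exact Or.inr ⟨a, ha, Or.inl ⟨hy, hx⟩⟩
  loopless := by
    refine ⟨?_⟩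
    rintro x (⟨a, b, hx, hy, hab⟩ | ⟨a, ha, (⟨hx, hy⟩ | ⟨hx, hy⟩)⟩) <;> simp_all

/-- The star-critical Gallai–Ramsey number `GR*_k(H)`: the least `s` such that
every rainbow-triangle-free `k`-edge-coloring of the complete graph on
`GR_k(H) - 1` vertices plus one extra vertex joined to exactly `s` of them
contains a monochromatic copy of `H`. -/
noncomputable def GRstar (k : ℕ) {α : Type*} (H : SimpleGraph α) : ℕ :=
  sInf {s | ∀ A : Finset (Fin (GallaiRamsey k H - 1)), A.card = s →
    ∀ c : Option (Fin (GallaiRamsey k H - 1)) → Option (Fin (GallaiRamsey k H - 1)) → Fin k,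
      (∀ x y, c x y = c y x) →
      NoRainbowTriangle (addVertex (GallaiRamsey k H - 1) (↑A)) c →
      IsMonoCopy (addVertex (GallaiRamsey k H - 1) (↑A)) c H}

/-- `H` is Gallai-Ramsey-full for `k` colors: the complete graph on `GR_k(H)`
vertices minus one edge admits a rainbow-triangle-free `k`-edge-coloring with
no monochromatic copy of `H`. -/
def GallaiRamseyFull (k : ℕ) {α : Type*} (H : SimpleGraph α) : Prop :=
  ∃ c : Fin (GallaiRamsey k H) → Fin (GallaiRamsey k H) → Fin k,
    (∀ x y, c x y = c y x) ∧
    NoRainbowTriangle (compMinusEdge (GallaiRamsey k H)) c ∧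
    ¬ IsMonoCopy (compMinusEdge (GallaiRamsey k H)) c H

/-- Reachability inside the vertex set `s`: there is a walk all of whose
vertices lie in `s`. -/
def ReachableWithin {V : Type*} (R : SimpleGraph V) (s : Set V) (u v : V) : Prop :=
  ∃ w : R.Walk u v, ∀ x ∈ w.support, x ∈ s

/-!
Blow up the pentagon: replace the vertices of `K_5` by coloured complete graphs and colour the
edges between the parts with two new colours `p` and `q`, which form a `C_5` and its complement.
Both are triangle-free, so a kipas in colour `p` has a rim that cannot take two consecutive steps
outside the part of its centre. Hence `p` may also be used inside the parts of an independent set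
of the `C_5`, as long as it is light there: every vertex has `p`-degree less than `m / 2` and there
is no `p`-coloured path on `m` vertices. Likewise `q` may be used inside the other two parts,
the first part aside.

Starting from the given colouring, each round adds two colours and four parts. A part that may use
one new light colour is in turn obtained by blowing up pentagons, from a balanced pair of
complementary circulant graphs on `c` vertices and a single monochromatic part on `m / 2` vertices.
The sum of the part sizes is the claimed increase. Ramsey's theorem guarantees that the infimum
defining the Gallai–Ramsey number is attained.
-/

section Graphs

variable {α ι U : Type*} {V : ι → Type*} {m n : ℕ}

theorem isContained_iff_of_isUniversal_zero {K : SimpleGraph (Fin (n + 1))}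
    (hK : K.IsUniversal 0) {G : SimpleGraph U} :
    K ⊑ G ↔ ∃ (v : U) (w : Copy (K.comap Fin.succ) G), ∀ j, G.Adj v (w j) := by
  constructor
  · rintro ⟨f⟩
    exact ⟨f 0, ⟨⟨fun j => f j.succ, fun h => f.toHom.map_adj h⟩,
      f.injective.comp (Fin.succ_injective n)⟩,
      fun j => f.toHom.map_adj (hK (Fin.succ_ne_zero j).symm)⟩
  · rintro ⟨v, w, hv⟩
    have hinj : Function.Injective (Fin.cons v w : Fin (n + 1) → U) :=
      Fin.cons_injective_iff.2 ⟨fun ⟨j, hj⟩ => (hv j).ne hj.symm, w.injective⟩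
    refine ⟨⟨⟨Fin.cons v w, fun {a b} hab => ?_⟩, hinj⟩⟩
    cases a using Fin.cases <;> cases b using Fin.cases
    · exact absurd hab (K.irrefl)
    · exact hv _
    · exact (hv _).symm
    · exact w.toHom.map_adj hab

theorem kipasG_isUniversal_zero : (kipasG m).IsUniversal 0 :=
  fun _ h => ⟨h, Or.inl (Or.inl rfl)⟩

theorem kipasG_comap_succ : (kipasG m).comap Fin.succ = pathGraph m := by
  ext a b
  simp only [kipasG, comap_adj, fromRel_adj, pathGraph_adj, Fin.val_succ, ne_eq, Fin.ext_iff,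
    Fin.val_zero]
  omega

theorem kipasG_isContained_iff {G : SimpleGraph U} :
    kipasG m ⊑ G ↔ ∃ (v : U) (w : Copy (pathGraph m) G), ∀ j, G.Adj v (w j) := by
  rw [isContained_iff_of_isUniversal_zero kipasG_isUniversal_zero, kipasG_comap_succ]

theorem pathGraph_isContained_kipasG : pathGraph m ⊑ kipasG m :=
  let ⟨_, w, _⟩ := kipasG_isContained_iff.1 (IsContained.refl (kipasG m))
  ⟨w⟩

theorem starGraph_isContained_iff {G : SimpleGraph U} :
    starGraph (0 : Fin (n + 1)) ⊑ G ↔ ∃ (v : U) (w : Fin n ↪ U), ∀ j, G.Adj v (w j) := by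
  have hcomap : (starGraph (0 : Fin (n + 1))).comap Fin.succ = ⊥ := by
    ext a b
    simp [Fin.succ_ne_zero]
  rw [isContained_iff_of_isUniversal_zero isUniversal_starGraph_self, hcomap]
  exact ⟨fun ⟨v, w, hv⟩ => ⟨v, w.toEmbedding, hv⟩,
    fun ⟨v, w, hv⟩ => ⟨v, ⟨⟨w, fun h => h.elim⟩, w.injective⟩, hv⟩⟩

/-- A graph in which every vertex has fewer than `m / 2` neighbours and no path has `m` vertices.
A colour whose graph is light can still be used for the next blow-up of a pentagon. -/
structure IsLight (m : ℕ) (G : SimpleGraph U) : Prop where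
  starGraph_free : (starGraph (0 : Fin (m / 2 + 1))).Free G
  pathGraph_free : (pathGraph m).Free G

theorem IsLight.kipasG_free {G : SimpleGraph U} (h : IsLight m G) : (kipasG m).Free G :=
  fun hG => h.pathGraph_free (pathGraph_isContained_kipasG.trans hG)

theorem IsLight.of_isContained {W : Type*} {G : SimpleGraph U} {H : SimpleGraph W}
    (h : IsLight m H) (hGH : G ⊑ H) : IsLight m G :=
  ⟨fun hG => h.starGraph_free (hG.trans hGH), fun hG => h.pathGraph_free (hG.trans hGH)⟩

theorem isLight_bot (hm : 2 ≤ m) : IsLight m (⊥ : SimpleGraph U) := by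
  constructor
  · intro h
    obtain ⟨_, _, hv⟩ := starGraph_isContained_iff.1 h
    exact hv ⟨0, by omega⟩
  · rintro ⟨w⟩
    have hadj : (pathGraph m).Adj ⟨0, by omega⟩ ⟨1, by omega⟩ := pathGraph_adj.2 (Or.inl rfl)
    exact w.toHom.map_adj hadj

theorem isLight_of_card_lt [Fintype U] {G : SimpleGraph U} (hU : Fintype.card U < m)
    (hG : (starGraph (0 : Fin (m / 2 + 1))).Free G) : IsLight m G := by
  refine ⟨hG, fun ⟨w⟩ => hU.not_ge ?_⟩
  simpa using Fintype.card_le_of_injective w w.injective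

/-- The generalized composition `A[G]`: every vertex `a` of `A` is replaced by the graph `G a`. -/
def substGraph (A : SimpleGraph ι) (G : ∀ a, SimpleGraph (V a)) : SimpleGraph (Σ a, V a) :=
  A.comap Sigma.fst ⊔ ⨆ a, (G a).map (Function.Embedding.sigmaMk a)

variable {A : SimpleGraph ι} {G : ∀ a, SimpleGraph (V a)}

theorem substGraph_adj {x y : Σ a, V a} :
    (substGraph A G).Adj x y ↔
      A.Adj x.1 y.1 ∨ ∃ a u v, (G a).Adj u v ∧ (⟨a, u⟩ : Σ a, V a) = x ∧ ⟨a, v⟩ = y := by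
  simp [substGraph, SimpleGraph.map_adj]

theorem substGraph_adj_mk {a : ι} {x y : V a} :
    (substGraph A G).Adj ⟨a, x⟩ ⟨a, y⟩ ↔ (G a).Adj x y := by
  rw [substGraph_adj]
  constructor
  · rintro (h | ⟨b, u, v, h, hx, hy⟩)
    · exact absurd h (A.irrefl)
    · cases hx
      cases hy
      exact h
  · exact fun h => Or.inr ⟨a, x, y, h, rfl, rfl⟩

theorem substGraph_adj_of_fst_ne {x y : Σ a, V a} (h : x.1 ≠ y.1) :
    (substGraph A G).Adj x y ↔ A.Adj x.1 y.1 := by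
  rw [substGraph_adj, or_iff_left]
  rintro ⟨a, u, v, -, rfl, rfl⟩
  exact h rfl

theorem substGraph_bot_bot :
    substGraph (⊥ : SimpleGraph ι) (fun a => (⊥ : SimpleGraph (V a))) = ⊥ := by
  ext x y
  simp [substGraph_adj]

theorem fst_eq_of_substGraph_bot_adj {x y : Σ a, V a} (h : (substGraph ⊥ G).Adj x y) :
    x.1 = y.1 := by
  obtain h | ⟨a, u, v, -, rfl, rfl⟩ := substGraph_adj.1 h
  · exact h.elim
  · rfl

theorem fst_mem_of_substGraph_bot_adj {L : Set ι} (hbot : ∀ a ∉ L, G a = ⊥) {x y : Σ a, V a}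
    (h : (substGraph ⊥ G).Adj x y) : x.1 ∈ L := by
  obtain h | ⟨a, u, v, huv, rfl, -⟩ := substGraph_adj.1 h
  · exact h.elim
  · by_contra ha
    rw [hbot a ha] at huv
    exact huv

theorem free_substGraph_bot {H : SimpleGraph α} (hH : H.Connected) (h : ∀ a, H.Free (G a)) :
    H.Free (substGraph ⊥ G) := by
  rintro ⟨f⟩
  obtain ⟨x₀⟩ := hH.nonempty
  have hpart (x : α) : (f x).1 = (f x₀).1 := by
    obtain ⟨p⟩ := hH.preconnected x x₀
    induction p with
    | nil => rfl
    | cons hadj _ ih => exact (fst_eq_of_substGraph_bot_adj (f.toHom.map_adj hadj)).trans ih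
  have hlift (x : α) : ∃ u : V (f x₀).1, f x = ⟨(f x₀).1, u⟩ :=
    ⟨hpart x ▸ (f x).2, Sigma.ext (hpart x) (by simp)⟩
  choose g hg using hlift
  refine h (f x₀).1 ⟨⟨⟨g, fun {x y} hxy => ?_⟩, fun x y hxy => f.injective ?_⟩⟩
  · have hadj := f.toHom.map_adj hxy
    rw [Copy.toHom_apply, Copy.toHom_apply, hg x, hg y] at hadj
    exact substGraph_adj_mk.1 hadj
  · exact (hg x).trans ((congrArg _ hxy).trans (hg y).symm)

theorem isLight_substGraph_bot (hm : 0 < m) (h : ∀ a, IsLight m (G a)) :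
    IsLight m (substGraph ⊥ G) := by
  obtain ⟨l, rfl⟩ := Nat.exists_eq_add_of_lt hm
  exact ⟨free_substGraph_bot (connected_starGraph _) fun a => (h a).starGraph_free,
    free_substGraph_bot (pathGraph_connected _) fun a => (h a).pathGraph_free⟩

theorem kipasG_free_substGraph_bot (h : ∀ a, (kipasG m).Free (G a)) :
    (kipasG m).Free (substGraph ⊥ G) :=
  free_substGraph_bot (.of_isUniversal kipasG_isUniversal_zero) h

theorem substGraph_bot_adj_of_common_neighbor (hA : A.CliqueFree 3) {a : ι} {y z : Σ a, V a}
    (hy : A.Adj a y.1) (hz : A.Adj a z.1) (h : (substGraph A G).Adj y z) :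
    (substGraph ⊥ G).Adj y z := by
  obtain h | h := substGraph_adj.1 h
  · exact absurd h (isIndepSet_neighborSet_of_triangleFree A hA a hy hz h.ne)
  · exact substGraph_adj.2 (Or.inr h)

theorem exists_embedding_half_of_consecutive {P : Fin m → Prop}
    (hP : ∀ i j : Fin m, i.val + 1 = j.val → P i ∨ P j) :
    ∃ g : Fin (m / 2) ↪ Fin m, ∀ t, P (g t) := by
  have hpair (t : Fin (m / 2)) : ∃ j : Fin m, j.val / 2 = t.val ∧ P j := by
    obtain h | h := hP ⟨2 * t, by omega⟩ ⟨2 * t + 1, by omega⟩ rfl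
    · exact ⟨_, by simp, h⟩
    · exact ⟨_, by simp only; omega, h⟩
  choose g hg hgP using hpair
  exact ⟨⟨g, fun s t hst => Fin.ext (by rw [← hg s, ← hg t, hst])⟩, hgP⟩

theorem kipasG_free_substGraph {L : Set ι} (hm : 2 ≤ m) (hA : A.CliqueFree 3)
    (hL : A.IsIndepSet L) (hlight : ∀ a ∈ L, IsLight m (G a)) (hbot : ∀ a ∉ L, G a = ⊥) :
    (kipasG m).Free (substGraph A G) := by
  have hparts : IsLight m (substGraph ⊥ G) := isLight_substGraph_bot (by omega) fun b => by
    by_cases hb : b ∈ L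
    · exact hlight b hb
    · exact hbot b hb ▸ isLight_bot hm
  intro hcopy
  obtain ⟨⟨a, v⟩, w, hv⟩ := kipasG_isContained_iff.1 hcopy
  have hspoke (j : Fin m) : A.Adj a (w j).1 ∨ (substGraph ⊥ G).Adj ⟨a, v⟩ (w j) :=
    (substGraph_adj.1 (hv j)).imp_right fun h => substGraph_adj.2 (Or.inr h)
  have hrim {i j : Fin m} (hij : (pathGraph m).Adj i j) (hi : A.Adj a (w i).1)
      (hj : A.Adj a (w j).1) : (substGraph ⊥ G).Adj (w i) (w j) :=
    substGraph_bot_adj_of_common_neighbor hA hi hj (w.toHom.map_adj hij)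
  by_cases ha : a ∈ L
  · -- The rim cannot take two consecutive steps outside the part of the centre.
    have hconsec (i j : Fin m) (hij : i.val + 1 = j.val) :
        (substGraph ⊥ G).Adj ⟨a, v⟩ (w i) ∨ (substGraph ⊥ G).Adj ⟨a, v⟩ (w j) := by
      by_contra! hout
      have hi := (hspoke i).resolve_right hout.1
      have hj := (hspoke j).resolve_right hout.2
      exact hL ha (fst_mem_of_substGraph_bot_adj hbot (hrim (pathGraph_adj.2 (Or.inl hij)) hi hj))
        hi.ne hi
    obtain ⟨g, hg⟩ := exists_embedding_half_of_consecutive hconsec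
    exact hparts.starGraph_free
      (starGraph_isContained_iff.2 ⟨⟨a, v⟩, g.trans w.toEmbedding, hg⟩)
  · have hout (j : Fin m) : A.Adj a (w j).1 :=
      (hspoke j).resolve_right fun h => ha (fst_mem_of_substGraph_bot_adj hbot h)
    exact hparts.pathGraph_free ⟨⟨⟨w, fun h => hrim h (hout _) (hout _)⟩, w.injective⟩⟩

end Graphs

section Colorings

variable {α κ U W ι : Type*} {V : ι → Type*} {k : ℕ}

/-- The graph formed by the edges of the complete graph that `χ` gives the colour `i`. -/
def colorClass (χ : W → W → κ) (i : κ) : SimpleGraph W :=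
  fromRel fun x y => χ x y = i

theorem colorClass_adj {χ : W → W → κ} (hχ : ∀ x y, χ x y = χ y x) {i : κ} {x y : W} :
    (colorClass χ i).Adj x y ↔ x ≠ y ∧ χ x y = i := by
  rw [colorClass, fromRel_adj, hχ y x, or_self]

theorem isMonoCopy_top_iff {χ : W → W → Fin k} (hχ : ∀ x y, χ x y = χ y x) {H : SimpleGraph α} :
    IsMonoCopy ⊤ χ H ↔ ∃ i, H ⊑ colorClass χ i := by
  constructor
  · rintro ⟨f, i, hf, h⟩
    exact ⟨i, ⟨⟨⟨f, fun hab => (colorClass_adj hχ).2 (h _ _ hab)⟩, hf⟩⟩⟩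
  · rintro ⟨i, ⟨w⟩⟩
    exact ⟨w, i, w.injective, fun a b hab => (colorClass_adj hχ).1 (w.toHom.map_adj hab)⟩

theorem IsMonoCopy.of_comap {χ : W → W → Fin k} {f : U ↪ W} {H : SimpleGraph α}
    (h : IsMonoCopy ⊤ (fun x y => χ (f x) (f y)) H) : IsMonoCopy ⊤ χ H :=
  let ⟨g, i, hg, hgi⟩ := h
  ⟨f ∘ g, i, f.injective.comp hg, fun a b hab => (hgi a b hab).imp_left f.injective.ne⟩

theorem NoRainbowTriangle.comap {χ : W → W → Fin k} (h : NoRainbowTriangle ⊤ χ) (f : U ↪ W) :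
    NoRainbowTriangle ⊤ (fun x y => χ (f x) (f y)) :=
  fun ⟨x, y, z, hxy, hyz, hxz, hne⟩ =>
    h ⟨f x, f y, f z, f.injective.ne hxy, f.injective.ne hyz, f.injective.ne hxz, hne⟩

theorem colorClass_comap (χ : W → W → κ) (f : U ↪ W) (i : κ) :
    colorClass (fun x y => χ (f x) (f y)) i = (colorClass χ i).comap f := by
  ext x y
  simp [colorClass]

theorem colorClass_const_of_ne {e i : κ} (h : i ≠ e) :
    colorClass (fun _ _ : W => e) i = ⊥ := by
  ext x y
  simp [colorClass, h.symm]

open Classical in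
/-- The colouring of the complete graph with colour `p` on the edges of `A` and `q` elsewhere. -/
noncomputable def twoColoring (A : SimpleGraph W) (p q : κ) (x y : W) : κ :=
  if A.Adj x y then p else q

theorem twoColoring_comm (A : SimpleGraph W) (p q : κ) (x y : W) :
    twoColoring A p q x y = twoColoring A p q y x := by
  classical rw [twoColoring, twoColoring, if_congr (A.adj_comm x y) rfl rfl]

theorem noRainbowTriangle_twoColoring (A : SimpleGraph W) (p q : Fin k) :
    NoRainbowTriangle ⊤ (twoColoring A p q) := by
  rintro ⟨x, y, z, -, -, -, h₁, h₂, h₃⟩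
  unfold twoColoring at h₁ h₂ h₃
  split_ifs at h₁ h₂ h₃ <;> contradiction

theorem colorClass_twoColoring_left (A : SimpleGraph W) {p q : κ} (hpq : p ≠ q) :
    colorClass (twoColoring A p q) p = A := by
  ext x y
  rw [colorClass_adj (twoColoring_comm A p q), twoColoring]
  split_ifs with h
  · simp [h, h.ne]
  · simp [h, hpq.symm]

theorem colorClass_twoColoring_right (A : SimpleGraph W) {p q : κ} (hpq : p ≠ q) :
    colorClass (twoColoring A p q) q = Aᶜ := by
  ext x y
  rw [colorClass_adj (twoColoring_comm A p q), twoColoring, compl_adj]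
  split_ifs with h
  · simp [h, hpq]
  · simp [h]

theorem colorClass_twoColoring_of_ne (A : SimpleGraph W) {p q i : κ} (hp : i ≠ p) (hq : i ≠ q) :
    colorClass (twoColoring A p q) i = ⊥ := by
  ext x y
  rw [colorClass_adj (twoColoring_comm A p q), twoColoring]
  split_ifs <;> simp [hp.symm, hq.symm]

/-- The colouring of the disjoint union of the `V a` in which pairs inside `V a` are coloured by
`χ a` and pairs between `V a` and `V b` get the colour `β a b`. -/
def substColoring [DecidableEq ι] (β : ι → ι → κ) (χ : ∀ a, V a → V a → κ)
    (x y : Σ a, V a) : κ :=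
  if h : x.1 = y.1 then χ y.1 (h ▸ x.2) y.2 else β x.1 y.1

variable [DecidableEq ι]

theorem substColoring_mk (β : ι → ι → κ) (χ : ∀ a, V a → V a → κ) {a : ι} (x y : V a) :
    substColoring β χ ⟨a, x⟩ ⟨a, y⟩ = χ a x y :=
  dif_pos rfl

theorem substColoring_mk_of_ne (β : ι → ι → κ) (χ : ∀ a, V a → V a → κ) {a b : ι} (hab : a ≠ b)
    (x : V a) (y : V b) : substColoring β χ ⟨a, x⟩ ⟨b, y⟩ = β a b :=
  dif_neg hab

theorem substColoring_comm {β : ι → ι → κ} {χ : ∀ a, V a → V a → κ}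
    (hβ : ∀ a b, β a b = β b a) (hχ : ∀ a x y, χ a x y = χ a y x) (x y : Σ a, V a) :
    substColoring β χ x y = substColoring β χ y x := by
  obtain ⟨a, x⟩ := x
  obtain ⟨b, y⟩ := y
  obtain rfl | hab := eq_or_ne a b
  · simp only [substColoring_mk, hχ a x y]
  · rw [substColoring_mk_of_ne β χ hab, substColoring_mk_of_ne β χ hab.symm, hβ]

theorem colorClass_substColoring (β : ι → ι → κ) (χ : ∀ a, V a → V a → κ) (i : κ) :
    colorClass (substColoring β χ) i =
      substGraph (colorClass β i) (fun a => colorClass (χ a) i) := by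
  ext ⟨a, x⟩ ⟨b, y⟩
  obtain rfl | hab := eq_or_ne a b
  · simp [substGraph_adj_mk, colorClass, substColoring_mk]
  · have hne : (⟨a, x⟩ : Σ a, V a) ≠ ⟨b, y⟩ := fun h => hab (congrArg Sigma.fst h)
    rw [substGraph_adj_of_fst_ne hab, colorClass, colorClass, fromRel_adj, fromRel_adj,
      substColoring_mk_of_ne β χ hab, substColoring_mk_of_ne β χ hab.symm]
    simp only [ne_eq, hne, hab, not_false_eq_true, true_and]

theorem noRainbowTriangle_substColoring {β : ι → ι → Fin k} {χ : ∀ a, V a → V a → Fin k}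
    (hβ : ∀ a b, β a b = β b a) (hβ' : NoRainbowTriangle ⊤ β)
    (hχ : ∀ a, NoRainbowTriangle ⊤ (χ a)) : NoRainbowTriangle ⊤ (substColoring β χ) := by
  rintro ⟨⟨a, x⟩, ⟨b, y⟩, ⟨c, z⟩, hxy, hyz, hxz, h₁, h₂, h₃⟩
  obtain rfl | hab := eq_or_ne a b
  · obtain rfl | hac := eq_or_ne a c
    · simp only [substColoring_mk] at h₁ h₂ h₃
      exact hχ a ⟨x, y, z, fun h => hxy (h ▸ rfl), fun h => hyz (h ▸ rfl), fun h => hxz (h ▸ rfl),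
        h₁, h₂, h₃⟩
    · exact h₂ (by rw [substColoring_mk_of_ne β χ hac, substColoring_mk_of_ne β χ hac])
  · obtain rfl | hbc := eq_or_ne b c
    · exact h₃ (by rw [substColoring_mk_of_ne β χ hab, substColoring_mk_of_ne β χ hab])
    · rw [substColoring_mk_of_ne β χ hab, substColoring_mk_of_ne β χ hbc] at h₁
      obtain rfl | hac := eq_or_ne a c
      · exact h₁ (hβ a b)
      · rw [substColoring_mk_of_ne β χ hac] at h₂ h₃
        rw [substColoring_mk_of_ne β χ hbc] at h₂
        rw [substColoring_mk_of_ne β χ hab] at h₃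
        exact hβ' ⟨a, b, c, hab, hbc, hac, h₁, h₂, h₃⟩

end Colorings

section KipasColorings

variable {W U : Type*} {k m : ℕ} {S L : Finset (Fin k)}

/-- A Gallai colouring in which the colours of `S` contain no kipas `K̂_m`, those of `L` are light
and no further colour occurs. The colours of `S` cannot be used for another blow-up. -/
structure IsKipasColoring (m : ℕ) (S L : Finset (Fin k)) (χ : W → W → Fin k) : Prop where
  symm : ∀ x y, χ x y = χ y x
  noRainbowTriangle : NoRainbowTriangle ⊤ χ
  kipasG_free : ∀ i ∈ S, (kipasG m).Free (colorClass χ i)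
  isLight : ∀ i ∉ S, IsLight m (colorClass χ i)
  eq_bot : ∀ i ∉ S, i ∉ L → colorClass χ i = ⊥

namespace IsKipasColoring

theorem not_isMonoCopy {χ : W → W → Fin k} (h : IsKipasColoring m S L χ) :
    ¬ IsMonoCopy ⊤ χ (kipasG m) := by
  rw [isMonoCopy_top_iff h.symm]
  rintro ⟨i, hi⟩
  by_cases hiS : i ∈ S
  · exact h.kipasG_free i hiS hi
  · exact (h.isLight i hiS).kipasG_free hi

theorem mono_light {L' : Finset (Fin k)} (hL : L ⊆ L') {χ : W → W → Fin k}
    (h : IsKipasColoring m S L χ) : IsKipasColoring m S L' χ where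
  __ := h
  eq_bot i hS hL' := h.eq_bot i hS fun hi => hL' (hL hi)

theorem comap {χ : W → W → Fin k} (h : IsKipasColoring m S L χ) (f : U ↪ W) :
    IsKipasColoring m S L (fun x y => χ (f x) (f y)) := by
  have hcomap (i : Fin k) : colorClass (fun x y => χ (f x) (f y)) i ⊑ colorClass χ i :=
    colorClass_comap χ f i ▸ ⟨(Embedding.comap f _).toCopy⟩
  exact
    { symm := fun x y => h.symm _ _
      noRainbowTriangle := h.noRainbowTriangle.comap f
      kipasG_free := fun i hi hK => h.kipasG_free i hi (hK.trans (hcomap i))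
      isLight := fun i hi => (h.isLight i hi).of_isContained (hcomap i)
      eq_bot := fun i hS hL => by rw [colorClass_comap, h.eq_bot i hS hL, comap_bot] }

theorem of_twoColoring_of_free (hm : 2 ≤ m) {A : SimpleGraph W} {p q : Fin k} (hpq : p ≠ q)
    (hA : (kipasG m).Free A) (hA' : (kipasG m).Free Aᶜ) :
    IsKipasColoring m {p, q} ∅ (twoColoring A p q) := by
  have hbot (i : Fin k) (hi : i ∉ ({p, q} : Finset (Fin k))) :
      colorClass (twoColoring A p q) i = ⊥ := by
    rw [Finset.mem_insert, Finset.mem_singleton, not_or] at hi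
    exact colorClass_twoColoring_of_ne A hi.1 hi.2
  refine ⟨twoColoring_comm A p q, noRainbowTriangle_twoColoring A p q, fun i hi => ?_,
    fun i hi => hbot i hi ▸ isLight_bot hm, fun i hi _ => hbot i hi⟩
  obtain rfl | hi := Finset.mem_insert.1 hi
  · rwa [colorClass_twoColoring_left A hpq]
  · rwa [Finset.mem_singleton.1 hi, colorClass_twoColoring_right A hpq]

theorem of_twoColoring_of_isLight (hm : 2 ≤ m) {A : SimpleGraph W} {p q : Fin k} (hpq : p ≠ q)
    (hA : IsLight m A) (hA' : IsLight m Aᶜ) :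
    IsKipasColoring m ∅ {p, q} (twoColoring A p q) := by
  have h := of_twoColoring_of_free hm hpq hA.kipasG_free hA'.kipasG_free
  refine ⟨h.symm, h.noRainbowTriangle, fun i hi => absurd hi (Finset.notMem_empty i),
    fun i _ => ?_, fun i _ hi => h.eq_bot i hi (Finset.notMem_empty i)⟩
  obtain rfl | hp := eq_or_ne i p
  · rwa [colorClass_twoColoring_left A hpq]
  obtain rfl | hq := eq_or_ne i q
  · rwa [colorClass_twoColoring_right A hpq]
  · exact colorClass_twoColoring_of_ne A hp hq ▸ isLight_bot hm

theorem const [Fintype W] (hm : 2 ≤ m) (hW : Fintype.card W ≤ m / 2) (e : Fin k) :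
    IsKipasColoring m ∅ {e} (fun _ _ : W => e) where
  symm _ _ := rfl
  noRainbowTriangle := fun ⟨_, _, _, _, _, _, h, _⟩ => h rfl
  kipasG_free i hi := absurd hi (Finset.notMem_empty i)
  isLight _ _ := isLight_of_card_lt (by omega) fun ⟨w⟩ => by
    have := Fintype.card_le_of_injective w w.injective
    rw [Fintype.card_fin] at this
    omega
  eq_bot i _ hi := colorClass_const_of_ne (Finset.mem_singleton.not.1 hi)

theorem subst {ι : Type*} [DecidableEq ι] {V : ι → Type*} {A : SimpleGraph ι} {P Q : Set ι}
    {p q : Fin k} {Λ : ι → Finset (Fin k)} {χ : ∀ a, V a → V a → Fin k} (hm : 2 ≤ m)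
    (hA : A.CliqueFree 3) (hA' : Aᶜ.CliqueFree 3) (hP : A.IsIndepSet P) (hQ : Aᶜ.IsIndepSet Q)
    (hpq : p ≠ q) (hpS : p ∉ S) (hqS : q ∉ S) (hχ : ∀ a, IsKipasColoring m S (Λ a) (χ a))
    (hΛ : ∀ a, Λ a ⊆ insert p (insert q L)) (hp : ∀ a ∉ P, p ∉ Λ a) (hq : ∀ a ∉ Q, q ∉ Λ a) :
    IsKipasColoring m (insert p (insert q S)) L (substColoring (twoColoring A p q) χ) := by
  have hclass {i : Fin k} (hip : i ≠ p) (hiq : i ≠ q) :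
      colorClass (substColoring (twoColoring A p q) χ) i =
        substGraph ⊥ fun a => colorClass (χ a) i := by
    rw [colorClass_substColoring, colorClass_twoColoring_of_ne A hip hiq]
  refine ⟨substColoring_comm (twoColoring_comm A p q) fun a => (hχ a).symm,
    noRainbowTriangle_substColoring (twoColoring_comm A p q) (noRainbowTriangle_twoColoring A p q)
      fun a => (hχ a).noRainbowTriangle, fun i hi => ?_, fun i hi => ?_, fun i hi hL => ?_⟩
  · obtain rfl | hip := eq_or_ne i p
    · rw [colorClass_substColoring, colorClass_twoColoring_left A hpq]
      exact kipasG_free_substGraph hm hA hP (fun a _ => (hχ a).isLight i hpS)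
        fun a ha => (hχ a).eq_bot i hpS (hp a ha)
    obtain rfl | hiq := eq_or_ne i q
    · rw [colorClass_substColoring, colorClass_twoColoring_right A hpq]
      exact kipasG_free_substGraph hm hA' hQ (fun a _ => (hχ a).isLight i hqS)
        fun a ha => (hχ a).eq_bot i hqS (hq a ha)
    rw [hclass hip hiq]
    have hiS := Finset.mem_of_mem_insert_of_ne (Finset.mem_of_mem_insert_of_ne hi hip) hiq
    exact kipasG_free_substGraph_bot fun a => (hχ a).kipasG_free i hiS
  all_goals
    simp only [Finset.mem_insert, not_or] at hi
    obtain ⟨hip, hiq, hiS⟩ := hi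
    rw [hclass hip hiq]
  · exact isLight_substGraph_bot (by omega) fun a => (hχ a).isLight i hiS
  · have hiΛ (a : ι) : i ∉ Λ a := fun hi =>
      hL (Finset.mem_of_mem_insert_of_ne (Finset.mem_of_mem_insert_of_ne (hΛ a hi) hip) hiq)
    simp only [fun a => (hχ a).eq_bot i hiS (hiΛ a), substGraph_bot_bot]

end IsKipasColoring

end KipasColorings

section Realizable

variable {k m : ℕ} {S L : Finset (Fin k)} {N M : ℕ}

/-- Some kipas colouring of the complete graph on `N` vertices has saturated colours `S` and light
colours `L`. -/
def Realizable (m : ℕ) (S L : Finset (Fin k)) (N : ℕ) : Prop :=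
  ∃ χ : Fin N → Fin N → Fin k, IsKipasColoring m S L χ

theorem IsKipasColoring.realizable {W : Type*} [Fintype W] {χ : W → W → Fin k}
    (h : IsKipasColoring m S L χ) (hN : Fintype.card W = N) : Realizable m S L N :=
  ⟨_, h.comap (Fintype.equivFinOfCardEq hN).symm.toEmbedding⟩

theorem cycleGraph_five_cliqueFree_three : (cycleGraph 5).CliqueFree 3 := by
  unfold CliqueFree
  decide

theorem cycleGraph_five_compl_cliqueFree_three : (cycleGraph 5)ᶜ.CliqueFree 3 := by
  unfold CliqueFree
  decide

theorem isIndepSet_cycleGraph_five : (cycleGraph 5).IsIndepSet {1, 4} := by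
  rw [isIndepSet_iff, Set.pairwise_pair]
  decide

theorem isIndepSet_cycleGraph_five_compl : (cycleGraph 5)ᶜ.IsIndepSet {2, 3} := by
  rw [isIndepSet_iff, Set.pairwise_pair]
  decide

theorem exists_insert_insert_of_card_eq {κ : Type*} [DecidableEq κ] {T : Finset κ} {n : ℕ}
    (hT : T.card = n + 2) :
    ∃ p q T', p ≠ q ∧ p ∉ T' ∧ q ∉ T' ∧ insert p (insert q T') = T ∧ T'.card = n := by
  obtain ⟨p, R, hp, rfl, hR⟩ := Finset.card_eq_succ.1 hT
  obtain ⟨q, T', hq, rfl, hT'⟩ := Finset.card_eq_succ.1 hR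
  rw [Finset.mem_insert, not_or] at hp
  exact ⟨p, q, T', hp.1, hp.2, hq, rfl, hT'⟩

namespace Realizable

theorem mono_light {L' : Finset (Fin k)} (h : Realizable m S L N) (hL : L ⊆ L') :
    Realizable m S L' N :=
  h.imp fun _ hχ => hχ.mono_light hL

theorem pentagon {p q : Fin k} (hm : 2 ≤ m) (hpq : p ≠ q) (hpS : p ∉ S) (hqS : q ∉ S)
    (hpL : p ∉ L) (hqL : q ∉ L) (h : Realizable m S L N) (hp : Realizable m S (insert p L) M)
    (hq : Realizable m S (insert q L) M) :
    Realizable m (insert p (insert q S)) L (N + 4 * M) := by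
  have hcell (a : Fin 5) : Realizable m S (![L, insert p L, insert q L, insert q L, insert p L] a)
      (![N, M, M, M, M] a) := by
    fin_cases a
    exacts [h, hp, hq, hq, hp]
  choose χ hχ using hcell
  refine (IsKipasColoring.subst hm cycleGraph_five_cliqueFree_three
    cycleGraph_five_compl_cliqueFree_three isIndepSet_cycleGraph_five
    isIndepSet_cycleGraph_five_compl hpq hpS hqS hχ (fun a => ?_) (fun a ha => ?_)
    fun a ha => ?_).realizable ?_
  · have hqL := Finset.subset_insert q L
    fin_cases a
    exacts [hqL.trans (Finset.subset_insert p _), Finset.insert_subset_insert p hqL,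
      Finset.subset_insert p _, Finset.subset_insert p _, Finset.insert_subset_insert p hqL]
  · fin_cases a <;> simp_all
  · fin_cases a <;> simp_all [Ne.symm]
  · simp only [Fintype.card_sigma, Fintype.card_fin, Fin.sum_univ_five, Matrix.cons_val]
    ring

theorem pow_mul {c t : ℕ} {e f : Fin k} (hm : 2 ≤ m) (hef : e ≠ f)
    (hc : ∀ p q : Fin k, p ≠ q → Realizable m ∅ {p, q} c) (hS : S.card = 2 * t) (he : e ∉ S)
    (hf : f ∉ S) : Realizable m S {e, f} (5 ^ t * c) := by
  induction t generalizing S with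
  | zero => simpa [Finset.card_eq_zero.1 hS] using hc e f hef
  | succ t ih =>
    obtain ⟨p, q, S, hpq, hp, hq, rfl, hS'⟩ := exists_insert_insert_of_card_eq hS
    simp only [Finset.mem_insert, not_or] at he hf
    have hcell := ih hS' he.2.2 hf.2.2
    have hstep := hcell.pentagon hm hpq hp hq (by simp [Ne.symm he.1, Ne.symm hf.1])
      (by simp [Ne.symm he.2.1, Ne.symm hf.2.1]) (hcell.mono_light (Finset.subset_insert p _))
      (hcell.mono_light (Finset.subset_insert q _))
    rwa [show 5 ^ t * c + 4 * (5 ^ t * c) = 5 ^ (t + 1) * c by ring] at hstep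

theorem add_pow_sub_one_mul {b c t : ℕ} {e : Fin k} (hm : 2 ≤ m)
    (hb : ∀ p : Fin k, Realizable m ∅ {p} b)
    (hc : ∀ p q : Fin k, p ≠ q → Realizable m ∅ {p, q} c) (hS : S.card = 2 * t) (he : e ∉ S) :
    Realizable m S {e} (b + (5 ^ t - 1) * c) := by
  induction t generalizing S with
  | zero => simpa [Finset.card_eq_zero.1 hS] using hb e
  | succ t ih =>
    obtain ⟨p, q, S, hpq, hp, hq, rfl, hS'⟩ := exists_insert_insert_of_card_eq hS
    simp only [Finset.mem_insert, not_or] at he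
    have hstep := (ih hS' he.2.2).pentagon hm hpq hp hq (by simpa using Ne.symm he.1)
      (by simpa using Ne.symm he.2.1) (pow_mul hm (Ne.symm he.1) hc hS' hp he.2.2)
      (pow_mul hm (Ne.symm he.2.1) hc hS' hq he.2.2)
    obtain ⟨r, hr⟩ := Nat.exists_eq_add_of_le' (Nat.one_le_pow t 5 (by norm_num))
    rw [hr, Nat.add_sub_cancel, add_assoc] at hstep
    rw [pow_succ, hr]
    convert hstep using 2
    rw [show (r + 1) * 5 - 1 = 5 * r + 4 by omega]
    ring

theorem add_sum {b c n j : ℕ} (hm : 2 ≤ m) (hb : ∀ p : Fin k, Realizable m ∅ {p} b)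
    (hc : ∀ p q : Fin k, p ≠ q → Realizable m ∅ {p, q} c)
    (hn : ∀ p q : Fin k, p ≠ q → Realizable m {p, q} ∅ n) (hS : S.card = 2 * (j + 1)) :
    Realizable m S ∅ (n + ∑ s ∈ Finset.range j, 4 * (b + (5 ^ (s + 1) - 1) * c)) := by
  induction j generalizing S with
  | zero =>
    obtain ⟨p, q, hpq, rfl⟩ := Finset.card_eq_two.1 hS
    simpa using hn p q hpq
  | succ j ih =>
    obtain ⟨p, q, S, hpq, hp, hq, rfl, hS'⟩ := exists_insert_insert_of_card_eq hS
    rw [Finset.sum_range_succ, ← add_assoc]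
    exact (ih hS').pentagon hm hpq hp hq (Finset.notMem_empty p) (Finset.notMem_empty q)
      (add_pow_sub_one_mul hm hb hc hS' hp) (add_pow_sub_one_mul hm hb hc hS' hq)

end Realizable

theorem sum_pentagon_cells {b c d : ℕ} (hd : d + 2 * b = 2 * c) (j : ℕ) :
    ∑ s ∈ Finset.range j, 4 * (b + (5 ^ (s + 1) - 1) * c) + d * (2 * j) = 5 * c * (5 ^ j - 1) := by
  induction j with
  | zero => simp
  | succ j ih =>
    obtain ⟨r, hr⟩ := Nat.exists_eq_add_of_le' (Nat.one_le_pow j 5 (by norm_num))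
    rw [hr, Nat.add_sub_cancel] at ih
    rw [Finset.sum_range_succ, pow_succ, hr, show (r + 1) * 5 - 1 = 5 * r + 4 by omega]
    linear_combination ih + 2 * hd

end Realizable

section CirculantGraphs

theorem starGraph_free_of_adj_mem {U β : Type*} {n : ℕ} {G : SimpleGraph U} {δ : U → U → β}
    {D : Finset β} (hδ : ∀ v, Function.Injective (δ v)) (hD : ∀ v w, G.Adj v w → δ v w ∈ D)
    (hn : D.card < n) : (starGraph (0 : Fin (n + 1))).Free G := by
  intro h
  obtain ⟨v, w, hv⟩ := starGraph_isContained_iff.1 h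
  have hcard := Finset.card_le_card_of_injOn (s := Finset.univ) (fun j => δ v (w j))
    (fun j _ => hD v (w j) (hv j)) ((hδ v).comp w.injective).injOn
  rw [Finset.card_fin] at hcard
  omega

theorem zmod_val_sub_injective {c : ℕ} [NeZero c] (v : ZMod c) :
    Function.Injective fun w => (w - v).val :=
  (ZMod.val_injective c).comp (sub_left_injective (b := v))

theorem zmod_val_sub_add_val_sub {c : ℕ} [NeZero c] {v w : ZMod c} (h : v ≠ w) :
    (w - v).val + (v - w).val = c := by
  rw [← neg_sub w v, ZMod.neg_val, if_neg (sub_ne_zero.2 h.symm)]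
  have := ZMod.val_lt (w - v)
  omega

theorem exists_starGraph_free_and_compl_free {c t r : ℕ} [NeZero c] (ht : 2 * t < r)
    (hc : c ≤ 2 * t + r) :
    ∃ A : SimpleGraph (ZMod c), (starGraph (0 : Fin (r + 1))).Free A ∧
      (starGraph (0 : Fin (r + 1))).Free Aᶜ := by
  refine ⟨circulantGraph {x | x.val ≤ t}, ?_, ?_⟩
  · refine starGraph_free_of_adj_mem (D := Finset.Icc 1 t ∪ Finset.Icc (c - t) (c - 1))
      zmod_val_sub_injective (fun v w h => ?_) ?_
    · have hsum := zmod_val_sub_add_val_sub h.ne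
      have hlt := ZMod.val_lt (v - w)
      have hlt' := ZMod.val_lt (w - v)
      have hle : (v - w).val ≤ t ∨ (w - v).val ≤ t := h.2
      simp only [Finset.mem_union, Finset.mem_Icc]
      omega
    · refine (Finset.card_union_le _ _).trans_lt ?_
      have hpos := NeZero.pos c
      rw [Nat.card_Icc, Nat.card_Icc]
      omega
  · refine starGraph_free_of_adj_mem (D := Finset.Icc (t + 1) (c - t - 1))
      zmod_val_sub_injective (fun v w h => ?_) ?_
    · have hsum := zmod_val_sub_add_val_sub h.ne
      rw [compl_adj, circulantGraph_adj] at h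
      have hlt : ¬ ((v - w).val ≤ t ∨ (w - v).val ≤ t) := fun hle => h.2 ⟨h.1, hle⟩
      simp only [Finset.mem_Icc]
      omega
    · rw [Nat.card_Icc]
      omega

end CirculantGraphs

section Ramsey

variable {α V κ : Type*} {k : ℕ}

theorem exists_prehomogeneous [Fintype κ] (χ : V → V → κ) (n : ℕ) {S : Finset V}
    (hS : (Fintype.card κ + 1) ^ n ≤ S.card) :
    ∃ (v : Fin n → V) (f : Fin n → κ), (∀ j, v j ∈ S) ∧
      ∀ i j, i < j → v i ≠ v j ∧ χ (v i) (v j) = f i := by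
  classical
  induction n generalizing S with
  | zero => exact ⟨Fin.elim0, Fin.elim0, fun j => j.elim0, fun i => i.elim0⟩
  | succ n ih =>
    have hpos : 0 < (Fintype.card κ + 1) ^ n := by positivity
    obtain ⟨x, hx⟩ : S.Nonempty := Finset.card_pos.1 ((by positivity : 0 < _).trans_le hS)
    obtain hκ | hκ := isEmpty_or_nonempty κ
    · exact isEmptyElim (χ x x)
    have hrest : Fintype.card κ * (Fintype.card κ + 1) ^ n ≤ (S.erase x).card := by
      rw [Finset.card_erase_of_mem hx]
      refine Nat.le_sub_of_add_le (le_trans ?_ hS)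
      rw [pow_succ', add_mul, one_mul]
      exact Nat.add_le_add_left hpos _
    obtain ⟨e, -, he⟩ := Finset.exists_le_card_fiber_of_mul_le_card_of_maps_to
      (fun y _ => Finset.mem_univ (χ x y)) Finset.univ_nonempty hrest
    obtain ⟨v, f, hv, hvf⟩ := ih he
    simp only [Finset.mem_filter, Finset.mem_erase] at hv
    refine ⟨Fin.cons x v, Fin.cons e f, fun j => ?_, fun i j hij => ?_⟩
    · cases j using Fin.cases
      exacts [hx, (hv _).1.2]
    · cases j using Fin.cases with
      | zero => exact absurd hij (Fin.not_lt_zero i)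
      | succ j =>
        cases i using Fin.cases
        exacts [⟨(hv j).1.1.symm, (hv j).2⟩, hvf _ _ (Fin.succ_lt_succ_iff.1 hij)]

theorem exists_top_isContained_colorClass [Fintype V] {χ : V → V → Fin k} {n : ℕ}
    (hV : (k + 1) ^ (k * n) ≤ Fintype.card V) :
    ∃ i, (⊤ : SimpleGraph (Fin n)) ⊑ colorClass χ i := by
  obtain ⟨x⟩ := Fintype.card_pos_iff.1 ((by positivity : 0 < (k + 1) ^ (k * n)).trans_le hV)
  have : Nonempty (Fin k) := ⟨χ x x⟩
  obtain ⟨v, f, -, hvf⟩ := exists_prehomogeneous χ (k * n) (S := Finset.univ) (by simpa using hV)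
  obtain ⟨i, hi⟩ := Fintype.exists_le_card_fiber_of_mul_le_card f (n := n) (by simp)
  let g : Fin n ↪o Fin (k * n) := Finset.orderEmbOfCardLe _ hi
  have hfg (a : Fin n) : f (g a) = i := by
    simpa using Finset.orderEmbOfCardLe_mem _ hi a
  have hg {a b : Fin n} (hab : a < b) :
      v (g a) ≠ v (g b) ∧ χ (v (g a)) (v (g b)) = i :=
    hfg a ▸ hvf _ _ (g.lt_iff_lt.2 hab)
  have hmap {a b : Fin n} (hab : a ≠ b) : (colorClass χ i).Adj (v (g a)) (v (g b)) := by
    obtain h | h := hab.lt_or_gt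
    · exact ⟨(hg h).1, Or.inl (hg h).2⟩
    · exact ⟨(hg h).1.symm, Or.inr (hg h).2⟩
  exact ⟨i, ⟨⟨⟨fun a => v (g a), hmap⟩, fun a b hab => by_contra fun h => (hmap h).ne hab⟩⟩⟩

theorem exists_forall_isMonoCopy [Finite α] (k : ℕ) (H : SimpleGraph α) :
    ∃ N, ∀ χ : Fin N → Fin N → Fin k, (∀ x y, χ x y = χ y x) → IsMonoCopy ⊤ χ H := by
  obtain ⟨n, ⟨e⟩⟩ := Finite.exists_equiv_fin α
  refine ⟨(k + 1) ^ (k * n), fun χ hχ => (isMonoCopy_top_iff hχ).2 ?_⟩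
  obtain ⟨i, hi⟩ := exists_top_isContained_colorClass (χ := χ) (n := n) (Fintype.card_fin _).ge
  exact ⟨i, IsContained.trans ⟨⟨⟨e, fun h => e.injective.ne h.ne⟩, e.injective⟩⟩ hi⟩

theorem lt_gallaiRamsey [Finite α] {H : SimpleGraph α} {N : ℕ} {χ : Fin N → Fin N → Fin k}
    (hχ : ∀ x y, χ x y = χ y x) (hgallai : NoRainbowTriangle ⊤ χ) (hH : ¬ IsMonoCopy ⊤ χ H) :
    N < GallaiRamsey k H := by
  obtain ⟨M, hM⟩ := exists_forall_isMonoCopy k H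
  have hGR := Nat.sInf_mem (s := {N | ∀ c : Fin N → Fin N → Fin k, (∀ x y, c x y = c y x) →
    NoRainbowTriangle (⊤ : SimpleGraph (Fin N)) c → IsMonoCopy (⊤ : SimpleGraph (Fin N)) c H})
    ⟨M, fun c hc _ => hM c hc⟩
  by_contra! hle
  exact hH ((hGR _ (fun x y => hχ _ _) (hgallai.comap (Fin.castLEEmb hle))).of_comap)

theorem exists_coloring_ramsey2_sub_one [Nonempty α] (H : SimpleGraph α) :
    ∃ χ : Fin (Ramsey2 H - 1) → Fin (Ramsey2 H - 1) → Fin 2,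
      (∀ x y, χ x y = χ y x) ∧ ¬ IsMonoCopy ⊤ χ H := by
  obtain h | h := Nat.eq_zero_or_pos (Ramsey2 H)
  · have : IsEmpty (Fin (Ramsey2 H - 1)) := ⟨fun x => absurd x.isLt (by omega)⟩
    obtain ⟨a⟩ := ‹Nonempty α›
    exact ⟨isEmptyElim, isEmptyElim, fun ⟨f, _⟩ => isEmptyElim (f a)⟩
  · have hlt : ¬ ∀ χ : Fin (Ramsey2 H - 1) → Fin (Ramsey2 H - 1) → Fin 2,
        (∀ x y, χ x y = χ y x) → IsMonoCopy ⊤ χ H :=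
      Nat.notMem_of_lt_sInf (Nat.sub_one_lt_of_lt h)
    simpa only [not_forall, exists_prop] using hlt

end Ramsey

theorem colorClass_one_eq_compl {W : Type*} {χ : W → W → Fin 2} (hχ : ∀ x y, χ x y = χ y x) :
    colorClass χ 1 = (colorClass χ 0)ᶜ := by
  ext x y
  rw [compl_adj, colorClass_adj hχ, colorClass_adj hχ, not_and]
  refine and_congr_right fun hxy => ?_
  rw [imp_iff_right hxy]
  omega

theorem Realizable.of_not_isMonoCopy {k m n : ℕ} (hm : 2 ≤ m) {χ : Fin n → Fin n → Fin 2}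
    (hχ : ∀ x y, χ x y = χ y x) (h : ¬ IsMonoCopy ⊤ χ (kipasG m)) {p q : Fin k} (hpq : p ≠ q) :
    Realizable m {p, q} ∅ n := by
  rw [isMonoCopy_top_iff hχ, not_exists] at h
  exact ⟨_, .of_twoColoring_of_free hm hpq (h 0) (colorClass_one_eq_compl hχ ▸ h 1)⟩

theorem Realizable.of_balanced {k m c : ℕ} (hm : 2 ≤ m)
    (hc : (m / 2 % 2 = 0 ∧ c = 2 * (m / 2) - 2) ∨ (m / 2 % 2 = 1 ∧ c = 2 * (m / 2) - 1))
    {p q : Fin k} (hpq : p ≠ q) : Realizable m ∅ {p, q} c := by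
  have : NeZero c := ⟨by omega⟩
  obtain ⟨A, hA, hA'⟩ := exists_starGraph_free_and_compl_free (c := c) (t := (m / 2 - 1) / 2)
    (r := m / 2) (by omega) (by omega)
  have hcard : Fintype.card (ZMod c) < m := by
    rw [ZMod.card]
    omega
  exact (IsKipasColoring.of_twoColoring_of_isLight hm hpq (isLight_of_card_lt hcard hA)
    (isLight_of_card_lt hcard hA')).realizable (ZMod.card c)

theorem exists_gallaiColoring {m n c d : ℕ} (j : ℕ) (hm : 2 ≤ m)
    (hcd : (m / 2 % 2 = 0 ∧ c = 2 * (m / 2) - 2 ∧ d = 2 * (m / 2) - 4) ∨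
      (m / 2 % 2 = 1 ∧ c = 2 * (m / 2) - 1 ∧ d = 2 * (m / 2) - 2))
    {χ : Fin n → Fin n → Fin 2} (hχ : ∀ x y, χ x y = χ y x)
    (hmono : ¬ IsMonoCopy ⊤ χ (kipasG m)) :
    ∃ χ' : Fin (n + 5 * c * (5 ^ j - 1) - d * (2 * j)) →
        Fin (n + 5 * c * (5 ^ j - 1) - d * (2 * j)) → Fin (2 * (j + 1)),
      (∀ x y, χ' x y = χ' y x) ∧ NoRainbowTriangle ⊤ χ' ∧ ¬ IsMonoCopy ⊤ χ' (kipasG m) := by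
  have hcells := sum_pentagon_cells (b := m / 2) (c := c) (d := d) (by omega) j
  have hreal := Realizable.add_sum (b := m / 2) (c := c) (n := n) (j := j)
    (S := (Finset.univ : Finset (Fin (2 * (j + 1))))) hm
    (fun p => ⟨_, .const hm (Fintype.card_fin _).le p⟩)
    (fun _ _ => .of_balanced hm (by omega)) (fun _ _ => .of_not_isMonoCopy hm hχ hmono)
    (Finset.card_fin _)
  rw [← hcells, ← add_assoc, Nat.add_sub_cancel]
  obtain ⟨χ', h⟩ := hreal
  exact ⟨χ', h.symm, h.noRainbowTriangle, h.not_isMonoCopy⟩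

theorem kipas_gallai_lower_even_k_general (k m n c d : ℕ) (hk : 2 ≤ k) (hke : k % 2 = 0)
    (hm : 2 ≤ m)
    (hcd : (m / 2 % 2 = 0 ∧ c = 2 * (m / 2) - 2 ∧ d = 2 * (m / 2) - 4) ∨
      (m / 2 % 2 = 1 ∧ c = 2 * (m / 2) - 1 ∧ d = 2 * (m / 2) - 2))
    (h2 : ∃ χ : Fin n → Fin n → Fin 2, (∀ x y, χ x y = χ y x) ∧
      ¬ IsMonoCopy (⊤ : SimpleGraph (Fin n)) χ (kipasG m)) :
    (∃ χ : Fin (n + 5 * c * (5 ^ ((k - 2) / 2) - 1) - d * (k - 2)) →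
        Fin (n + 5 * c * (5 ^ ((k - 2) / 2) - 1) - d * (k - 2)) → Fin k,
      (∀ x y, χ x y = χ y x) ∧ NoRainbowTriangle ⊤ χ ∧ ¬ IsMonoCopy ⊤ χ (kipasG m)) ∧
    Ramsey2 (kipasG m) + 5 * c * (5 ^ ((k - 2) / 2) - 1) - d * (k - 2) ≤
      GallaiRamsey k (kipasG m) := by
  obtain ⟨j, rfl⟩ : ∃ j, k = 2 * (j + 1) := ⟨k / 2 - 1, by omega⟩
  rw [show 2 * (j + 1) - 2 = 2 * j by omega, Nat.mul_div_cancel_left j two_pos]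
  obtain ⟨χ, hχ, hmono⟩ := h2
  refine ⟨exists_gallaiColoring j hm hcd hχ hmono, ?_⟩
  obtain ⟨ρ, hρ, hρmono⟩ := exists_coloring_ramsey2_sub_one (kipasG m)
  obtain ⟨ψ, hψ, hgallai, hψmono⟩ := exists_gallaiColoring j hm hcd hρ hρmono
  have hlt := lt_gallaiRamsey hψ hgallai hψmono
  omega

/-- Even `k ≥ 2`, even `m ≥ 6`: from a 2-coloring of `K_n` with no monochromatic
kipas `K̂_m`, one gets a Gallai `k`-coloring of a larger complete graph with no
monochromatic `K̂_m`; consequently the Gallai–Ramsey lower bound. -/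
theorem kipas_gallai_lower_even_k (k m n c d : ℕ) (hk : 2 ≤ k) (hke : k % 2 = 0)
    (hm : 6 ≤ m) (hme : m % 2 = 0)
    (hcd : (m % 4 = 0 ∧ c = m - 2 ∧ d = m - 4) ∨ (m % 4 = 2 ∧ c = m - 1 ∧ d = m - 2))
    (h2 : ∃ χ : Fin n → Fin n → Fin 2, (∀ x y, χ x y = χ y x) ∧
      ¬ IsMonoCopy (⊤ : SimpleGraph (Fin n)) χ (kipasG m)) :
    (∃ χ : Fin (n + 5 * c * (5 ^ ((k - 2) / 2) - 1) - d * (k - 2)) →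
        Fin (n + 5 * c * (5 ^ ((k - 2) / 2) - 1) - d * (k - 2)) → Fin k,
      (∀ x y, χ x y = χ y x) ∧
      NoRainbowTriangle (⊤ : SimpleGraph (Fin (n + 5 * c * (5 ^ ((k - 2) / 2) - 1) - d * (k - 2)))) χ ∧
      ¬ IsMonoCopy (⊤ : SimpleGraph (Fin (n + 5 * c * (5 ^ ((k - 2) / 2) - 1) - d * (k - 2)))) χ (kipasG m)) ∧
    Ramsey2 (kipasG m) + 5 * c * (5 ^ ((k - 2) / 2) - 1) - d * (k - 2) ≤
      GallaiRamsey k (kipasG m) := by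
  exact kipas_gallai_lower_even_k_general k m n c d hk hke (by omega) (by omega) h2
end

section
/- Let m ≥ 6 be even. Suppose there exists an edge 2-coloring of the complete graph on n vertices with no monochromatic copy of the wheel W_m. Then there exists a Gallai 3-coloring of the complete graph on 2n vertices with no monochromatic copy of W_m. Consequently GR_3(W_m) ≥ 2·R_2(W_m) − 1. -/
open SimpleGraph

/-! Color `K_{ι × V}` by copies of a coloring of `K_V`, one for each element of `ι`, with all edges
between different copies in one new color. The edges of the new color form a complete multipartite
graph with parts indexed by `ι`, so a copy of `H` in that color would be a proper vertex coloring
of `H` by `ι`. A copy of `H` in an old color lies inside a single part when `H` is connected, so it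
already occurs in the coloring of `K_V`. For wheels two parts suffice to exclude the new color,
because a wheel contains a triangle. -/

section Pullback

variable {α V W : Type*} {k : ℕ} {G : SimpleGraph V} {G' : SimpleGraph W} {c : V → V → Fin k}

theorem NoRainbowTriangle.comp_hom (hc : NoRainbowTriangle G c) (f : G' →g G) :
    NoRainbowTriangle G' fun x y => c (f x) (f y) := by
  rintro ⟨x, y, z, hxy, hyz, hxz, hcolors⟩
  exact hc ⟨f x, f y, f z, f.map_adj hxy, f.map_adj hyz, f.map_adj hxz, hcolors⟩

theorem IsMonoCopy.of_comp_copy {H : SimpleGraph α} (f : Copy G' G)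
    (h : IsMonoCopy G' (fun x y => c (f x) (f y)) H) : IsMonoCopy G c H := by
  obtain ⟨g, i, hg, hmono⟩ := h
  exact ⟨f ∘ g, i, f.injective.comp hg, fun a b hab =>
    ⟨f.toHom.map_adj (hmono a b hab).1, (hmono a b hab).2⟩⟩

end Pullback

theorem noRainbowTriangle_of_fin_two {V : Type*} (G : SimpleGraph V) (c : V → V → Fin 2) :
    NoRainbowTriangle G c := by
  rintro ⟨x, y, z, -, -, -, h₁, h₂, h₃⟩
  omega

/-- `c` is a Gallai `k`-coloring of the complete graph on `V` without a monochromatic copy of `H`.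
Only the values of `c` at pairs of distinct vertices are colors of edges. -/
def IsGallaiAvoiding {α V : Type*} {k : ℕ} (c : V → V → Fin k) (H : SimpleGraph α) : Prop :=
  (∀ x y, c x y = c y x) ∧ NoRainbowTriangle (⊤ : SimpleGraph V) c ∧
    ¬ IsMonoCopy (⊤ : SimpleGraph V) c H

theorem IsGallaiAvoiding.comp_embedding {α V W : Type*} {k : ℕ} {c : V → V → Fin k}
    {H : SimpleGraph α} (hc : IsGallaiAvoiding c H) (f : W ↪ V) :
    IsGallaiAvoiding (fun x y => c (f x) (f y)) H :=
  let ⟨hsymm, hrainbow, hmono⟩ := hc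
  ⟨fun x y => hsymm (f x) (f y), hrainbow.comp_hom (Embedding.completeGraph f).toHom,
    fun h => hmono (h.of_comp_copy (Embedding.completeGraph f).toCopy)⟩

section Ramsey

theorem exists_le_card_fiber_of_sum_le_card {κ V : Type*} [Fintype κ] [DecidableEq κ] [Nonempty κ]
    {N : κ → ℕ} {S : Finset V} (f : V → κ) (h : ∑ i, N i ≤ S.card) :
    ∃ i, N i ≤ (S.filter fun x => f x = i).card := by
  have hsum : S.card = ∑ i, (S.filter fun x => f x = i).card :=
    Finset.card_eq_sum_card_fiberwise fun x _ => Finset.mem_coe.2 (Finset.mem_univ (f x))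
  simpa using Finset.exists_le_of_sum_le Finset.univ_nonempty (h.trans hsum.le)

/-- In the induction on `a`, a vertex `v` has many neighbors in some color `i`; among them one looks
for a clique that is one vertex smaller in color `i`, since `v` can be added to it. -/
theorem exists_forall_exists_pairwise_color_eq {κ : Type*} [Finite κ] (a : κ → ℕ) :
    ∃ N : ℕ, ∀ {V : Type*} (c : V → V → κ), (∀ x y, c x y = c y x) →
      ∀ S : Finset V, N ≤ S.card →
        ∃ i, ∃ T ⊆ S, T.card = a i ∧ (T : Set V).Pairwise fun x y => c x y = i := by
  classical
  have := Fintype.ofFinite κ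
  induction a using WellFoundedLT.induction with | ind a ih
  by_cases hzero : ∃ i, a i = 0
  · obtain ⟨i, hi⟩ := hzero
    exact ⟨0, fun c _ S _ => ⟨i, ∅, S.empty_subset, by simp [hi], by simp⟩⟩
  push Not at hzero
  have hlt (i : κ) : Function.update a i (a i - 1) < a :=
    update_lt_self_iff.2 (Nat.sub_one_lt (hzero i))
  choose N hN using fun i => ih _ (hlt i)
  refine ⟨∑ i, N i + 1, fun c hc S hS => ?_⟩
  obtain ⟨v, hv⟩ : S.Nonempty := Finset.card_pos.1 (by omega)
  have : Nonempty κ := ⟨c v v⟩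
  obtain ⟨i, hi⟩ := exists_le_card_fiber_of_sum_le_card (N := N) (S := S.erase v) (c v) <| by
    rw [Finset.card_erase_of_mem hv]
    omega
  obtain ⟨j, T, hTfiber, hTcard, hT⟩ := hN i c hc _ hi
  have hTmem {x} (hx : x ∈ T) : (x ≠ v ∧ x ∈ S) ∧ c v x = i := by
    simpa using hTfiber hx
  have hTS : T ⊆ S := fun x hx => (hTmem hx).1.2
  obtain rfl | hji := eq_or_ne j i
  · have hvT : v ∉ T := fun h => (hTmem h).1.1 rfl
    refine ⟨j, insert v T, Finset.insert_subset hv hTS, ?_, ?_⟩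
    · rw [Finset.card_insert_of_notMem hvT, hTcard, Function.update_self]
      exact Nat.sub_one_add_one (hzero j)
    · rw [Finset.coe_insert]
      exact hT.insert fun x hx _ => ⟨(hTmem hx).2, (hc x v).trans (hTmem hx).2⟩
  · exact ⟨j, T, hTS, by rw [hTcard, Function.update_of_ne hji], hT⟩

variable {α : Type*} [Finite α]

theorem isMonoCopy_top_of_pairwise_color_eq {V : Type*} {k : ℕ} (H : SimpleGraph α)
    {c : V → V → Fin k} {i : Fin k} {T : Finset V} (hcard : T.card = Nat.card α)
    (hT : (T : Set V).Pairwise fun x y => c x y = i) : IsMonoCopy (⊤ : SimpleGraph V) c H := by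
  let e : α ≃ T := (Finite.card_eq.1 (by simp [hcard])).some
  have he : Function.Injective fun a => (e a : V) := Subtype.val_injective.comp e.injective
  exact ⟨fun a => e a, i, he, fun a b hab =>
    ⟨he.ne hab.ne, hT (e a).2 (e b).2 (he.ne hab.ne)⟩⟩

theorem exists_forall_isMonoCopy_top (k : ℕ) (H : SimpleGraph α) :
    ∃ N : ℕ, ∀ c : Fin N → Fin N → Fin k, (∀ x y, c x y = c y x) →
      IsMonoCopy (⊤ : SimpleGraph (Fin N)) c H := by
  obtain ⟨N, hN⟩ := exists_forall_exists_pairwise_color_eq fun _ : Fin k => Nat.card α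
  refine ⟨N, fun c hc => ?_⟩
  obtain ⟨i, T, -, hcard, hT⟩ := hN c hc Finset.univ (by simp)
  exact isMonoCopy_top_of_pairwise_color_eq H hcard hT

end Ramsey

section GallaiRamsey

variable {α : Type*} {k n : ℕ} {H : SimpleGraph α}

theorem ramsey2_eq_gallaiRamsey_two (H : SimpleGraph α) : Ramsey2 H = GallaiRamsey 2 H := by
  simp only [Ramsey2, GallaiRamsey, noRainbowTriangle_of_fin_two, true_imp_iff]

theorem lt_gallaiRamsey_iff [Finite α] :
    n < GallaiRamsey k H ↔ ∃ c : Fin n → Fin n → Fin k, IsGallaiAvoiding c H := by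
  constructor
  · intro hn
    simpa [IsGallaiAvoiding] using Nat.notMem_of_lt_sInf hn
  · rintro ⟨c, hc⟩
    by_contra! hle
    obtain ⟨N, hN⟩ := exists_forall_isMonoCopy_top k H
    have hattained := Nat.sInf_mem (s := {N | ∀ c : Fin N → Fin N → Fin k,
      (∀ x y, c x y = c y x) → NoRainbowTriangle (⊤ : SimpleGraph (Fin N)) c →
      IsMonoCopy (⊤ : SimpleGraph (Fin N)) c H}) ⟨N, fun c hsymm _ => hN c hsymm⟩
    obtain ⟨hsymm, hrainbow, hmono⟩ := hc.comp_embedding (Fin.castLEEmb hle)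
    exact hmono (hattained _ hsymm hrainbow)

theorem gallaiRamsey_pos [Finite α] [Nonempty α] : 0 < GallaiRamsey k H :=
  lt_gallaiRamsey_iff.2 ⟨finZeroElim, finZeroElim, fun ⟨x, _⟩ => x.elim0,
    fun ⟨f, _⟩ => (f (Classical.arbitrary α)).elim0⟩

end GallaiRamsey

theorem eq_of_reachable_of_forall_adj_eq {α β : Type*} {H : SimpleGraph α} {p : α → β}
    (hp : ∀ a b, H.Adj a b → p a = p b) {a b : α} (hab : H.Reachable a b) : p a = p b := by
  obtain ⟨w⟩ := hab
  induction w with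
  | nil => rfl
  | cons hadj _ ih => exact (hp _ _ hadj).trans ih

section Blowup

variable {α ι V : Type*} [DecidableEq ι] {k : ℕ} {c : V → V → Fin k} {H : SimpleGraph α}

/-- The coloring of the complete graph on `ι × V` made of one copy of `c` for each element of `ι`,
with all edges between different copies in the new color `Fin.last k`. -/
def blowupColoring (ι : Type*) [DecidableEq ι] (c : V → V → Fin k) (x y : ι × V) : Fin (k + 1) :=
  if x.1 = y.1 then (c x.2 y.2).castSucc else Fin.last k

theorem blowupColoring_of_eq {x y : ι × V} (h : x.1 = y.1) :
    blowupColoring ι c x y = (c x.2 y.2).castSucc :=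
  if_pos h

theorem blowupColoring_eq_last_iff {x y : ι × V} :
    blowupColoring ι c x y = Fin.last k ↔ x.1 ≠ y.1 := by
  simp [blowupColoring, Fin.castSucc_ne_last]

theorem noRainbowTriangle_blowupColoring (hc : NoRainbowTriangle (⊤ : SimpleGraph V) c) :
    NoRainbowTriangle (⊤ : SimpleGraph (ι × V)) (blowupColoring ι c) := by
  rintro ⟨x, y, z, hxy, hyz, hxz, h₁, h₂, h₃⟩
  -- Two edges of the triangle have the new color as soon as its vertices lie in several copies.
  have hpart : x.1 = y.1 ∧ y.1 = z.1 := by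
    by_contra hne
    simp only [blowupColoring] at h₁ h₂ h₃
    grind
  have hpart' := hpart.1.trans hpart.2
  have hsnd {u v : ι × V} (huv : u.1 = v.1) (hne : u ≠ v) : u.2 ≠ v.2 :=
    fun h => hne (Prod.ext huv h)
  simp only [blowupColoring_of_eq, hpart.1, hpart.2, ne_eq, Fin.castSucc_inj] at h₁ h₂ h₃
  exact hc ⟨x.2, y.2, z.2, hsnd hpart.1 hxy, hsnd hpart.2 hyz, hsnd hpart' hxz, h₁, h₂, h₃⟩

theorem not_isMonoCopy_blowupColoring (hconn : H.Preconnected) (hcol : IsEmpty (H.Coloring ι))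
    (hc : ¬ IsMonoCopy (⊤ : SimpleGraph V) c H) :
    ¬ IsMonoCopy (⊤ : SimpleGraph (ι × V)) (blowupColoring ι c) H := by
  rintro ⟨f, i, hf, hmono⟩
  induction i using Fin.lastCases with
  | last =>
    exact hcol.false <| Coloring.mk (fun a => (f a).1) fun {a b} hab =>
      blowupColoring_eq_last_iff.1 (hmono a b hab).2
  | cast i =>
    have hadj (a b : α) (hab : H.Adj a b) : (f a).1 = (f b).1 := by
      by_contra hne
      rw [← ne_eq, ← blowupColoring_eq_last_iff (c := c), (hmono a b hab).2] at hne
      exact Fin.castSucc_ne_last i hne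
    have hpart (a b : α) : (f a).1 = (f b).1 := eq_of_reachable_of_forall_adj_eq hadj (hconn a b)
    have hinj : Function.Injective fun a => (f a).2 := fun a b hab => hf (Prod.ext (hpart a b) hab)
    refine hc ⟨fun a => (f a).2, i, hinj, fun a b hab => ⟨hinj.ne hab.ne, ?_⟩⟩
    rw [← Fin.castSucc_inj, ← blowupColoring_of_eq (hpart a b), (hmono a b hab).2]

theorem IsGallaiAvoiding.blowup (hc : IsGallaiAvoiding c H) (hconn : H.Preconnected)
    (hcol : IsEmpty (H.Coloring ι)) : IsGallaiAvoiding (blowupColoring ι c) H := by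
  obtain ⟨hsymm, hrainbow, hmono⟩ := hc
  refine ⟨fun x y => ?_, noRainbowTriangle_blowupColoring hrainbow,
    not_isMonoCopy_blowupColoring hconn hcol hmono⟩
  simp only [blowupColoring, hsymm x.2 y.2, eq_comm (a := x.1)]

end Blowup

section LowerBound

variable {α : Type*} {k t n : ℕ} {H : SimpleGraph α}

theorem exists_isGallaiAvoiding_mul (hconn : H.Preconnected) (hcol : ¬ H.Colorable t)
    (h : ∃ c : Fin n → Fin n → Fin k, IsGallaiAvoiding c H) :
    ∃ c : Fin (t * n) → Fin (t * n) → Fin (k + 1), IsGallaiAvoiding c H := by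
  obtain ⟨c, hc⟩ := h
  exact ⟨_, (hc.blowup hconn (not_nonempty_iff.1 hcol)).comp_embedding
    finProdFinEquiv.symm.toEmbedding⟩

theorem mul_gallaiRamsey_sub_one_lt [Finite α] (hconn : H.Connected) (hcol : ¬ H.Colorable t) :
    t * (GallaiRamsey k H - 1) < GallaiRamsey (k + 1) H := by
  have := hconn.nonempty
  have hlt : GallaiRamsey k H - 1 < GallaiRamsey k H := Nat.sub_one_lt gallaiRamsey_pos.ne'
  exact lt_gallaiRamsey_iff.2 <|
    exists_isGallaiAvoiding_mul hconn.preconnected hcol (lt_gallaiRamsey_iff.1 hlt)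

end LowerBound

section Wheel

variable {m : ℕ}

theorem wheelG_adj_zero {a : Fin (m + 1)} (ha : a ≠ 0) : (wheelG m).Adj 0 a := by
  simp [wheelG, ha.symm]

theorem wheelG_connected (m : ℕ) : (wheelG m).Connected := by
  refine (connected_iff_exists_forall_reachable _).2 ⟨0, fun a => ?_⟩
  obtain rfl | ha := eq_or_ne a 0
  · rfl
  · exact (wheelG_adj_zero ha).reachable

theorem not_colorable_two_wheelG (hm : 2 ≤ m) : ¬ (wheelG m).Colorable 2 := by
  intro hcol
  let u : Fin (m + 1) := ⟨1, by omega⟩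
  let v : Fin (m + 1) := ⟨2, by omega⟩
  have hu : u ≠ 0 := by simp [u, Fin.ext_iff]
  have hv : v ≠ 0 := by simp [v, Fin.ext_iff]
  have huv : (wheelG m).Adj u v := by simp [wheelG, u, v]
  exact hcol.cliqueFree (by norm_num) {0, u, v}
    (is3Clique_triple_iff.2 ⟨wheelG_adj_zero hu, wheelG_adj_zero hv, huv⟩)

end Wheel

theorem wheel_gallai3_lower_doubling_general {α : Type*} [Finite α] {H : SimpleGraph α}
    {k t n : ℕ} (hconn : H.Connected) (hcol : ¬ H.Colorable t)
    (h : ∃ c : Fin n → Fin n → Fin k, IsGallaiAvoiding c H) :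
    (∃ c : Fin (t * n) → Fin (t * n) → Fin (k + 1), IsGallaiAvoiding c H) ∧
      t * (GallaiRamsey k H - 1) + 1 ≤ GallaiRamsey (k + 1) H :=
  ⟨exists_isGallaiAvoiding_mul hconn.preconnected hcol h, mul_gallaiRamsey_sub_one_lt hconn hcol⟩

/-- For even `m ≥ 6`: from a 2-coloring of `K_n` with no monochromatic wheel
`W_m` one gets a Gallai 3-coloring of `K_{2n}` with no monochromatic `W_m`;
consequently `GR_3(W_m) ≥ 2·R_2(W_m) − 1`. -/
theorem wheel_gallai3_lower_doubling (m : ℕ) (hm : 6 ≤ m) (hme : m % 2 = 0) (n : ℕ)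
    (h2 : ∃ χ : Fin n → Fin n → Fin 2, (∀ x y, χ x y = χ y x) ∧
      ¬ IsMonoCopy (⊤ : SimpleGraph (Fin n)) χ (wheelG m)) :
    (∃ c : Fin (2 * n) → Fin (2 * n) → Fin 3, (∀ x y, c x y = c y x) ∧
      NoRainbowTriangle (⊤ : SimpleGraph (Fin (2 * n))) c ∧
      ¬ IsMonoCopy (⊤ : SimpleGraph (Fin (2 * n))) c (wheelG m)) ∧
    2 * Ramsey2 (wheelG m) - 1 ≤ GallaiRamsey 3 (wheelG m) := by
  obtain ⟨χ, hsymm, hmono⟩ := h2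
  obtain ⟨hc, hle⟩ := wheel_gallai3_lower_doubling_general (wheelG_connected m)
    (not_colorable_two_wheelG (by omega)) ⟨χ, hsymm, noRainbowTriangle_of_fin_two _ χ, hmono⟩
  rw [ramsey2_eq_gallaiRamsey_two]
  exact ⟨hc, (by omega : 2 * GallaiRamsey 2 (wheelG m) - 1 ≤ _).trans hle⟩
end
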